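/- arXiv:2602.06168 — 2 statements merged into one kernel-verified Lean document; each statement's English description precedes it below -/
import Mathlib

section
/- Let μ > 0. The sequence (L_n(e_0, ·))_n, where e_0 is the constant function 1, converges uniformly on [0,1] to the constant function 1; that is, sup_{x ∈ [0,1]} |ln_μ(x) · Σ_{k=0}^n (1/ln_μ(k/n)) · p_{n,k}(a_n(x)) − 1| → 0 as n → ∞. -/
open Real Filter Set

/-- `logμ μ x = ln(1+μ+x)`. -/
noncomputable def logμ (μ x : ℝ) : ℝ := Real.log (1 + μ + x)

/-- `a μ n x = ln(1 + x/(n(1+μ))) / ln(1 + 1/(n(1+μ)))`. -/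
noncomputable def aFun (μ : ℝ) (n : ℕ) (x : ℝ) : ℝ :=
  Real.log (1 + x / (n * (1 + μ))) / Real.log (1 + 1 / (n * (1 + μ)))

/-- Bernstein basis polynomial `p_{n,k}(y) = C(n,k) y^k (1-y)^(n-k)`. -/
noncomputable def pB (n k : ℕ) (y : ℝ) : ℝ :=
  (n.choose k : ℝ) * y ^ k * (1 - y) ^ (n - k)

/-- Classical Bernstein operator. -/
noncomputable def Bop (n : ℕ) (g : ℝ → ℝ) (y : ℝ) : ℝ :=
  ∑ k ∈ Finset.range (n + 1), g ((k : ℝ) / (n : ℝ)) * pB n k y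

/-- Bernstein-type logarithmic operator `L_n`. -/
noncomputable def Lop (μ : ℝ) (n : ℕ) (f : ℝ → ℝ) (x : ℝ) : ℝ :=
  logμ μ x * ∑ k ∈ Finset.range (n + 1),
    f ((k : ℝ) / (n : ℝ)) * (1 / logμ μ ((k : ℝ) / (n : ℝ))) * pB n k (aFun μ n x)

/-!
Dividing by `logμ μ` turns `Lop μ n f` into a classical Bernstein operator evaluated at the moved
point `aFun μ n x`: `Lop μ n f x = logμ μ x * Bop n (f / logμ μ) (aFun μ n x)`. With
`c = 1 / (n * (1 + μ))`, the moved point is `log (1 + x * c) / log (1 + c)`, which lies between `x`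
(Bernoulli's inequality) and `x * (1 + c)`, hence tends to `x` uniformly. Bernstein's theorem
and the uniform continuity of `f / logμ μ` on `[0, 1]` then give uniform convergence to
`logμ μ * (f / logμ μ) = f`.
-/

section UniformConvergence

variable {ι α β γ : Type*} [UniformSpace β] [UniformSpace γ] {p : Filter ι}

lemma tendstoUniformlyOn_comp_of_uniformContinuousOn {F : ι → β → γ} {f : β → γ} {G : ι → α → β}
    {g : α → β} {s : Set α} {t : Set β} (hF : TendstoUniformlyOn F f p t)
    (hf : UniformContinuousOn f t) (hG : TendstoUniformlyOn G g p s)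
    (hGt : ∀ᶠ i in p, MapsTo (G i) s t) (hgt : MapsTo g s t) :
    TendstoUniformlyOn (fun i x => F i (G i x)) (fun x => f (g x)) p s := by
  intro u hu
  obtain ⟨v, hv, hvu⟩ := comp_mem_uniformity_sets hu
  have hfG : TendstoUniformlyOn (fun i x => f (G i x)) (fun x => f (g x)) p s :=
    hf.comp_tendstoUniformlyOn_eventually hGt hgt hG
  filter_upwards [hF v hv, hfG v hv, hGt] with i hFi hfGi hGi x hx
  exact hvu (SetRel.prodMk_mem_comp (hfGi x hx) (hFi (G i x) (hGi hx)))

end UniformConvergence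

section Bernstein

variable {f g w : ℝ → ℝ}

lemma Bop_eq_bernsteinApproximation (n : ℕ) (hg : ContinuousOn g (Icc 0 1)) (y : unitInterval) :
    Bop n g y = bernsteinApproximation n ⟨(Icc 0 1).domRestrict g, hg.domRestrict⟩ y := by
  rw [bernsteinApproximation.apply, Bop, Finset.sum_range]
  refine Finset.sum_congr rfl fun k _ => ?_
  rw [bernstein_apply, smul_eq_mul, mul_comm]
  rfl

theorem tendstoUniformlyOn_Bop (hg : ContinuousOn g (Icc 0 1)) :
    TendstoUniformlyOn (fun n => Bop n g) g atTop (Icc 0 1) := by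
  rw [tendstoUniformlyOn_iff_tendstoUniformly_comp_coe]
  simp only [Function.comp_def, Bop_eq_bernsteinApproximation _ hg]
  exact ContinuousMap.tendsto_iff_tendstoUniformly.1 (bernsteinApproximation_uniform _)

theorem tendstoUniformlyOn_mul_Bop_div {a : ℕ → ℝ → ℝ} (hf : ContinuousOn f (Icc 0 1))
    (hw : ContinuousOn w (Icc 0 1)) (hw0 : ∀ x ∈ Icc (0 : ℝ) 1, w x ≠ 0)
    (ha : TendstoUniformlyOn a id atTop (Icc 0 1))
    (ha_mem : ∀ᶠ n in atTop, MapsTo (a n) (Icc 0 1) (Icc 0 1)) :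
    TendstoUniformlyOn (fun n x => w x * Bop n (fun y => f y / w y) (a n x)) f atTop
      (Icc 0 1) := by
  have hfw : ContinuousOn (fun y => f y / w y) (Icc 0 1) := hf.div hw hw0
  have hBop : TendstoUniformlyOn (fun n x => Bop n (fun y => f y / w y) (a n x))
      (fun x => f x / w x) atTop (Icc 0 1) :=
    tendstoUniformlyOn_comp_of_uniformContinuousOn (tendstoUniformlyOn_Bop hfw)
      (isCompact_Icc.uniformContinuousOn_of_continuous hfw) ha ha_mem (mapsTo_id _)
  have hconst : TendstoUniformlyOn (fun _ : ℕ => w) w atTop (Icc 0 1) :=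
    fun _ hu => .of_forall fun _ _ _ => refl_mem_uniformity hu
  have hmul := (tendstoLocallyUniformlyOn_iff_tendstoUniformlyOn_of_compact isCompact_Icc).1
    (hconst.tendstoLocallyUniformlyOn.mul₀ hBop.tendstoLocallyUniformlyOn hw hfw)
  exact hmul.congr_right fun x hx => mul_div_cancel₀ (f x) (hw0 x hx)

end Bernstein

section LogRatio

variable {c x : ℝ}

lemma mul_log_one_add_le_log_one_add_mul (hc : -1 < c) (hx : x ∈ Icc 0 1) :
    x * log (1 + c) ≤ log (1 + x * c) := by
  have hpos : 0 < 1 + c := by linarith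
  rw [← log_rpow hpos]
  exact log_le_log (rpow_pos_of_pos hpos x) (rpow_one_add_le_one_add_mul_self hc.le hx.1 hx.2)

lemma log_one_add_mul_le_mul_log_one_add (hc : 0 ≤ c) (hx : 0 ≤ x) :
    log (1 + x * c) ≤ x * (1 + c) * log (1 + c) := by
  have hc1 : 0 < 1 + c := by linarith
  have hlog : c ≤ (1 + c) * log (1 + c) := by
    calc c = (1 + c) * (1 - (1 + c)⁻¹) := by field_simp; ring
      _ ≤ (1 + c) * log (1 + c) := by gcongr; exact one_sub_inv_le_log_of_pos hc1
  calc log (1 + x * c) ≤ x * c := by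
        linarith [log_le_sub_one_of_pos (show 0 < 1 + x * c by positivity)]
    _ ≤ x * ((1 + c) * log (1 + c)) := by gcongr
    _ = x * (1 + c) * log (1 + c) := by ring

lemma log_one_add_mul_div_log_one_add_mem_Icc (hc : 0 ≤ c) (hx : x ∈ Icc 0 1) :
    log (1 + x * c) / log (1 + c) ∈ Icc 0 1 := by
  have hxc : 0 ≤ x * c := mul_nonneg hx.1 hc
  have hlog : 0 ≤ log (1 + c) := log_nonneg (by linarith)
  refine ⟨div_nonneg (log_nonneg (by linarith)) hlog, div_le_one_of_le₀ ?_ hlog⟩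
  exact log_le_log (by linarith) (by linarith [mul_le_of_le_one_left hc hx.2])

lemma abs_log_one_add_mul_div_log_one_add_sub_le (hc : 0 < c) (hx : x ∈ Icc 0 1) :
    |log (1 + x * c) / log (1 + c) - x| ≤ c := by
  have hlog : 0 < log (1 + c) := log_pos (by linarith)
  have hlower : x ≤ log (1 + x * c) / log (1 + c) :=
    (le_div_iff₀ hlog).2 (mul_log_one_add_le_log_one_add_mul (by linarith) hx)
  have hupper : log (1 + x * c) / log (1 + c) ≤ x * (1 + c) :=
    (div_le_iff₀ hlog).2 (log_one_add_mul_le_mul_log_one_add hc.le hx.1)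
  rw [abs_of_nonneg (sub_nonneg.2 hlower)]
  linarith [mul_le_of_le_one_left hc.le hx.2]

end LogRatio

section LogarithmicOperator

variable {μ : ℝ}

lemma aFun_eq_log_one_add_mul_div (μ : ℝ) (n : ℕ) (x : ℝ) :
    aFun μ n x = log (1 + x * (1 / (n * (1 + μ)))) / log (1 + 1 / (n * (1 + μ))) := by
  rw [aFun, mul_one_div]

-- At `n = 0` the quotient defining `aFun` is `0 / 0 = 0`, which still lies in `[0, 1]`.
lemma mapsTo_aFun (hμ : -1 < μ) (n : ℕ) : MapsTo (aFun μ n) (Icc 0 1) (Icc 0 1) := by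
  intro x hx
  have hμ1 : 0 < 1 + μ := by linarith
  rw [aFun_eq_log_one_add_mul_div]
  exact log_one_add_mul_div_log_one_add_mem_Icc (by positivity) hx

theorem tendstoUniformlyOn_aFun (hμ : -1 < μ) :
    TendstoUniformlyOn (aFun μ) id atTop (Icc 0 1) := by
  have hμ1 : 0 < 1 + μ := by linarith
  have hlim : Tendsto (fun n : ℕ => 1 / (n * (1 + μ))) atTop (nhds 0) :=
    (tendsto_natCast_atTop_atTop.atTop_mul_const hμ1).const_div_atTop 1
  rw [Metric.tendstoUniformlyOn_iff]
  intro ε hε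
  filter_upwards [hlim.eventually_lt_const hε, eventually_gt_atTop 0] with n hnε hn x hx
  rw [dist_comm, dist_eq, aFun_eq_log_one_add_mul_div]
  exact (abs_log_one_add_mul_div_log_one_add_sub_le (by positivity) hx).trans_lt hnε

lemma logμ_pos {x : ℝ} (h : 0 < μ + x) : 0 < logμ μ x :=
  log_pos (by linarith)

lemma continuousOn_logμ (μ : ℝ) : ContinuousOn (logμ μ) {x | 1 + μ + x ≠ 0} :=
  ContinuousOn.log (by fun_prop) fun _ hx => hx

lemma Lop_eq_mul_Bop_div (μ : ℝ) (n : ℕ) (f : ℝ → ℝ) (x : ℝ) :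
    Lop μ n f x = logμ μ x * Bop n (fun y => f y / logμ μ y) (aFun μ n x) := by
  simp only [Lop, Bop, mul_one_div]

theorem stmt7_general (hμ : 0 < μ) {f : ℝ → ℝ} (hf : ContinuousOn f (Icc 0 1)) :
    TendstoUniformlyOn (fun n x => Lop μ n f x) f atTop (Icc 0 1) := by
  have hμ1 : -1 < μ := by linarith
  have hlog_cont : ContinuousOn (logμ μ) (Icc 0 1) :=
    (continuousOn_logμ μ).mono fun x hx => (show 0 < 1 + μ + x by linarith [hx.1]).ne'
  have hlog_ne : ∀ x ∈ Icc (0 : ℝ) 1, logμ μ x ≠ 0 :=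
    fun x hx => (logμ_pos (add_pos_of_pos_of_nonneg hμ hx.1)).ne'
  simp only [Lop_eq_mul_Bop_div]
  exact tendstoUniformlyOn_mul_Bop_div hf hlog_cont hlog_ne (tendstoUniformlyOn_aFun hμ1)
    (.of_forall (mapsTo_aFun hμ1))

end LogarithmicOperator

theorem stmt7 (μ : ℝ) (hμ : 0 < μ) :
    TendstoUniformlyOn (fun (n : ℕ) (x : ℝ) => Lop μ n (fun _ => (1:ℝ)) x)
      (fun _ => (1:ℝ)) atTop (Set.Icc (0:ℝ) 1) := by
  exact stmt7_general hμ continuousOn_const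
end

section
/- (Voronovskaja-type formula) Let μ > 0 and let f : [0,1] → ℝ be twice continuously differentiable on [0,1]. Then for every x ∈ [0,1], lim_{n→∞} n · (L_n(f, x) − f(x)) = ln_μ(x) · ((x − x²)/2) · ( f_μ'(x)/(1+μ) + f_μ''(x) ), where f_μ(t) := f(t)/ln(1+μ+t). -/
open Real Filter Set

/-!
Since `L_n(f, x) = ln_μ(x) · B_n(f_μ, a_n(x))` with `B_n` the classical Bernstein operator, the
claim is Voronovskaja's theorem for `B_n` evaluated at the moving point `a_n(x)`. The drift
`n (a_n(x) - x) → (x - x²) / (2 (1 + μ))` multiplies `f_μ'`, and the variance contributes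
`(x - x²) / 2 · f_μ''`. For the Taylor remainder one bounds `o((t - x)²)` on the compact interval by
`ε (t - x)² + C (t - x)⁴`, and the fourth moment is `o(1 / n)`. The central moments follow from
`X (1 - X) B' = (ν - n X) B`, which expresses each one by the two before it.
-/

open Asymptotics Polynomial
open scoped Topology

section CentralMoments

variable (R : Type*) [CommRing R]

/-- The `m`-th central moment `∑ ν, (ν - n X) ^ m * B_{n, ν}` of the binomial distribution with `n`
trials, as a polynomial in the success probability `X`. -/
noncomputable def bernsteinCentralMoment (n m : ℕ) : R[X] :=
  ∑ ν ∈ Finset.range (n + 1), ((ν : R[X]) - (n : R[X]) * X) ^ m * bernsteinPolynomial R n ν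

theorem X_mul_one_sub_X_mul_derivative_bernsteinPolynomial (n ν : ℕ) :
    X * (1 - X) * derivative (bernsteinPolynomial R n ν) =
      ((ν : R[X]) - (n : R[X]) * X) * bernsteinPolynomial R n ν := by
  rcases lt_or_ge n ν with hν | hν
  · simp only [bernsteinPolynomial.eq_zero_of_lt R hν, derivative_zero, mul_zero]
  · obtain ⟨k, rfl⟩ := Nat.exists_eq_add_of_le hν
    have hX : X * derivative (X ^ ν : R[X]) = (ν : R[X]) * X ^ ν := by
      cases ν with
      | zero => simp
      | succ j =>
        simp only [derivative_X_pow_succ, map_add, map_natCast, map_one]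
        push_cast
        ring
    have hX' : (1 - X) * derivative ((1 - X) ^ k : R[X]) =
        -(k : R[X]) * (1 - X) ^ k := by
      cases k with
      | zero => simp
      | succ j =>
        simp only [derivative_pow_succ, map_add, map_natCast, map_one, derivative_sub,
          derivative_one, derivative_X]
        push_cast
        ring
    simp only [bernsteinPolynomial, Nat.add_sub_cancel_left, derivative_mul, derivative_natCast]
    push_cast
    linear_combination (((ν + k).choose ν : R[X]) * (1 - X) ^ k * (1 - X)) * hX +
      (((ν + k).choose ν : R[X]) * X ^ ν * X) * hX'

theorem bernsteinCentralMoment_add_two (n m : ℕ) :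
    bernsteinCentralMoment R n (m + 2) = X * (1 - X) *
      (derivative (bernsteinCentralMoment R n (m + 1)) +
        (n : R[X]) * ((m : R[X]) + 1) * bernsteinCentralMoment R n m) := by
  simp only [bernsteinCentralMoment, derivative_sum, Finset.mul_sum, ← Finset.sum_add_distrib]
  refine Finset.sum_congr rfl fun ν _ => ?_
  simp only [derivative_mul, derivative_pow_succ, derivative_sub, derivative_natCast, derivative_X]
  simp only [map_add, map_natCast, map_one]
  linear_combination (-((ν : R[X]) - (n : R[X]) * X) ^ (m + 1)) *
    X_mul_one_sub_X_mul_derivative_bernsteinPolynomial R n ν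

theorem bernsteinCentralMoment_zero (n : ℕ) : bernsteinCentralMoment R n 0 = 1 := by
  simp only [bernsteinCentralMoment, pow_zero, one_mul, bernsteinPolynomial.sum]

theorem bernsteinCentralMoment_one (n : ℕ) : bernsteinCentralMoment R n 1 = 0 := by
  have hmean := bernsteinPolynomial.sum_smul R n
  simp only [nsmul_eq_mul] at hmean
  simp only [bernsteinCentralMoment, pow_one, sub_mul, Finset.sum_sub_distrib, ← Finset.mul_sum,
    bernsteinPolynomial.sum, hmean, mul_one, sub_self]

theorem bernsteinCentralMoment_two (n : ℕ) :
    bernsteinCentralMoment R n 2 = (n : R[X]) * (X * (1 - X)) := by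
  rw [bernsteinCentralMoment_add_two, bernsteinCentralMoment_one, bernsteinCentralMoment_zero]
  simp only [derivative_zero, Nat.cast_zero]
  ring

theorem bernsteinCentralMoment_three (n : ℕ) :
    bernsteinCentralMoment R n 3 = (n : R[X]) * (X * (1 - X)) * (1 - 2 * X) := by
  rw [bernsteinCentralMoment_add_two, bernsteinCentralMoment_two, bernsteinCentralMoment_one]
  simp only [derivative_mul, derivative_natCast, derivative_X, derivative_sub, derivative_one]
  push_cast
  ring

theorem bernsteinCentralMoment_four (n : ℕ) :
    bernsteinCentralMoment R n 4 =
      3 * ((n : R[X]) * (X * (1 - X))) ^ 2 +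
        (n : R[X]) * (X * (1 - X)) * (1 - 6 * (X * (1 - X))) := by
  rw [bernsteinCentralMoment_add_two, bernsteinCentralMoment_three, bernsteinCentralMoment_two]
  simp only [derivative_mul, derivative_natCast, derivative_X, derivative_sub, derivative_one,
    derivative_ofNat]
  push_cast
  ring

end CentralMoments

section BernsteinOperator

theorem pB_eq_eval_bernsteinPolynomial (n k : ℕ) (y : ℝ) :
    pB n k y = (bernsteinPolynomial ℝ n k).eval y := by
  simp [pB, bernsteinPolynomial]

theorem pB_nonneg (n k : ℕ) {y : ℝ} (hy : y ∈ Icc (0 : ℝ) 1) : 0 ≤ pB n k y :=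
  mul_nonneg (mul_nonneg (Nat.cast_nonneg _) (pow_nonneg hy.1 _))
    (pow_nonneg (sub_nonneg.2 hy.2) _)

/-- The functional `g ↦ Bop n g y`, bundled as a linear map so that it can be fed to general
statements on positive functionals. -/
noncomputable def bernsteinFunctional (n : ℕ) (y : ℝ) : (ℝ → ℝ) →ₗ[ℝ] ℝ where
  toFun g := Bop n g y
  map_add' g h := by simp only [Bop, Pi.add_apply, add_mul, Finset.sum_add_distrib]
  map_smul' c g := by
    simp only [Bop, Pi.smul_apply, smul_eq_mul, mul_assoc, Finset.mul_sum, RingHom.id_apply]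

theorem bernsteinFunctional_apply (n : ℕ) (y : ℝ) (g : ℝ → ℝ) :
    bernsteinFunctional n y g = Bop n g y := rfl

theorem Bop_nonneg (n : ℕ) {y : ℝ} (hy : y ∈ Icc (0 : ℝ) 1) {g : ℝ → ℝ}
    (hg : ∀ t ∈ Icc (0 : ℝ) 1, 0 ≤ g t) : 0 ≤ Bop n g y := by
  refine Finset.sum_nonneg fun k hk => mul_nonneg (hg _ ⟨by positivity, ?_⟩) (pB_nonneg n k hy)
  exact div_le_one_of_le₀ (Nat.cast_le.2 (Finset.mem_range_succ_iff.1 hk)) n.cast_nonneg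

theorem Bop_one (n : ℕ) (y : ℝ) : Bop n (fun _ => 1) y = 1 := by
  simp only [Bop, one_mul, pB_eq_eval_bernsteinPolynomial, ← eval_finsetSum,
    bernsteinPolynomial.sum, eval_one]

theorem Bop_sub_pow {n : ℕ} (hn : n ≠ 0) (m : ℕ) (x y : ℝ) :
    Bop n (fun t => (t - x) ^ m) y = ∑ j ∈ Finset.range (m + 1),
      (bernsteinCentralMoment ℝ n j).eval y / n ^ j * (y - x) ^ (m - j) * m.choose j := by
  have hnode (k : ℕ) : (k : ℝ) / n - x = (k - n * y) / n + (y - x) := by field_simp; ring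
  simp only [Bop, hnode, add_pow, Finset.sum_mul]
  rw [Finset.sum_comm]
  refine Finset.sum_congr rfl fun j _ => ?_
  simp only [bernsteinCentralMoment, eval_finsetSum, Finset.sum_div, Finset.sum_mul]
  refine Finset.sum_congr rfl fun k _ => ?_
  simp only [pB_eq_eval_bernsteinPolynomial, div_pow, eval_mul, eval_pow, eval_sub, eval_natCast,
    eval_X]
  ring

theorem Bop_sub {n : ℕ} (hn : n ≠ 0) (x y : ℝ) : Bop n (fun t => t - x) y = y - x := by
  simpa [Finset.sum_range_succ, bernsteinCentralMoment_zero, bernsteinCentralMoment_one]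
    using Bop_sub_pow hn 1 x y

theorem Bop_sub_sq {n : ℕ} (hn : n ≠ 0) (x y : ℝ) :
    Bop n (fun t => (t - x) ^ 2) y = y * (1 - y) / n + (y - x) ^ 2 := by
  rw [Bop_sub_pow hn]
  simp only [Finset.sum_range_succ, Finset.sum_range_zero, bernsteinCentralMoment_zero,
    bernsteinCentralMoment_one, bernsteinCentralMoment_two, eval_mul, eval_sub, eval_natCast,
    eval_zero, eval_one, eval_X, Nat.choose_zero_right, Nat.choose_one_right, Nat.choose_self]
  push_cast
  field_simp
  ring

theorem Bop_sub_pow_four {n : ℕ} (hn : n ≠ 0) (x y : ℝ) :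
    Bop n (fun t => (t - x) ^ 4) y =
      3 * (y * (1 - y)) ^ 2 / n ^ 2 + y * (1 - y) * (1 - 6 * (y * (1 - y))) / n ^ 3 +
        4 * (y * (1 - y) * (1 - 2 * y)) * (y - x) / n ^ 2 +
        6 * (y * (1 - y)) * (y - x) ^ 2 / n + (y - x) ^ 4 := by
  have hchoose : Nat.choose 4 2 = 6 := rfl
  rw [Bop_sub_pow hn]
  simp only [Finset.sum_range_succ, Finset.sum_range_zero, bernsteinCentralMoment_zero,
    bernsteinCentralMoment_one, bernsteinCentralMoment_two, bernsteinCentralMoment_three,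
    bernsteinCentralMoment_four, eval_add, eval_mul, eval_pow, eval_sub, eval_natCast, eval_ofNat,
    eval_zero, eval_one, eval_X, Nat.choose_zero_right, Nat.choose_one_right, hchoose,
    Nat.choose_succ_self_right, Nat.choose_self]
  push_cast
  field_simp
  ring

variable {a : ℕ → ℝ} {x L : ℝ}

theorem tendsto_sub_zero_of_tendsto_natCast_mul_sub
    (ha : Tendsto (fun n : ℕ => (n : ℝ) * (a n - x)) atTop (𝓝 L)) :
    Tendsto (fun n => a n - x) atTop (𝓝 0) := by
  have hmul := ha.mul (tendsto_inv_atTop_nhds_zero_nat (𝕜 := ℝ))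
  rw [mul_zero] at hmul
  refine hmul.congr' ?_
  filter_upwards [eventually_ne_atTop 0] with n hn
  field_simp

theorem tendsto_natCast_mul_Bop_sub_sq
    (ha : Tendsto (fun n : ℕ => (n : ℝ) * (a n - x)) atTop (𝓝 L)) :
    Tendsto (fun n : ℕ => (n : ℝ) * Bop n (fun t => (t - x) ^ 2) (a n)) atTop
      (𝓝 (x - x ^ 2)) := by
  have hsub := tendsto_sub_zero_of_tendsto_natCast_mul_sub ha
  have hax := tendsto_sub_nhds_zero_iff.1 hsub
  have hlim := (hax.mul (hax.const_sub 1)).add (ha.mul hsub)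
  rw [show x * (1 - x) + L * 0 = x - x ^ 2 by ring] at hlim
  refine hlim.congr' ?_
  filter_upwards [eventually_ne_atTop 0] with n hn
  rw [Bop_sub_sq hn]
  field_simp

theorem tendsto_natCast_mul_Bop_sub_pow_four
    (ha : Tendsto (fun n : ℕ => (n : ℝ) * (a n - x)) atTop (𝓝 L)) :
    Tendsto (fun n : ℕ => (n : ℝ) * Bop n (fun t => (t - x) ^ 4) (a n)) atTop (𝓝 0) := by
  have hsub := tendsto_sub_zero_of_tendsto_natCast_mul_sub ha
  have hax := tendsto_sub_nhds_zero_iff.1 hsub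
  have hinv := tendsto_inv_atTop_nhds_zero_nat (𝕜 := ℝ)
  have hv := hax.mul (hax.const_sub 1)
  have hlim := (((((hv.pow 2).const_mul 3).mul hinv).add
    ((hv.mul ((hv.const_mul 6).const_sub 1)).mul (hinv.pow 2))).add
    ((((hv.mul ((hax.const_mul 2).const_sub 1)).const_mul 4).mul hsub).mul hinv)).add
    ((hv.const_mul 6).mul (hsub.pow 2)) |>.add (ha.mul (hsub.pow 3))
  simp only [mul_zero, add_zero, ne_eq, OfNat.ofNat_ne_zero, not_false_eq_true, zero_pow] at hlim
  refine hlim.congr' ?_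
  filter_upwards [eventually_ne_atTop 0] with n hn
  rw [Bop_sub_pow_four hn]
  field_simp

end BernsteinOperator

section PositiveFunctionals

variable {s : Set ℝ} {x : ℝ}

theorem exists_abs_le_mul_sq_add_mul_pow_four {ρ : ℝ → ℝ} {M : ℝ}
    (hρ : ρ =o[𝓝[s] x] fun t => (t - x) ^ 2) (hM : ∀ t ∈ s, |ρ t| ≤ M) {ε : ℝ} (hε : 0 < ε) :
    ∃ C, ∀ t ∈ s, |ρ t| ≤ ε * (t - x) ^ 2 + C * (t - x) ^ 4 := by
  obtain ⟨δ, hδ, hnear⟩ := Metric.mem_nhdsWithin_iff.1 (hρ.def hε)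
  refine ⟨|M| / δ ^ 4, fun t ht => ?_⟩
  rcases lt_or_ge (dist t x) δ with hclose | hfar
  · have hsmall : |ρ t| ≤ ε * (t - x) ^ 2 := by simpa using hnear ⟨hclose, ht⟩
    exact hsmall.trans (le_add_of_nonneg_right (by positivity))
  · have hpow : δ ^ 4 ≤ (t - x) ^ 4 := by
      rw [← Even.pow_abs (by decide : Even 4) (t - x)]
      exact pow_le_pow_left₀ hδ.le hfar 4
    calc |ρ t| ≤ |M| := (hM t ht).trans (le_abs_self M)
      _ ≤ |M| / δ ^ 4 * (t - x) ^ 4 := by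
        rw [div_mul_eq_mul_div, le_div_iff₀ (by positivity)]
        exact mul_le_mul_of_nonneg_left hpow (abs_nonneg M)
      _ ≤ ε * (t - x) ^ 2 + |M| / δ ^ 4 * (t - x) ^ 4 := le_add_of_nonneg_left (by positivity)

theorem abs_map_le_of_forall_abs_le {α : Type*} {s : Set α} {Λ : (α → ℝ) →ₗ[ℝ] ℝ}
    (hΛ : ∀ g : α → ℝ, (∀ t ∈ s, 0 ≤ g t) → 0 ≤ Λ g) {g h : α → ℝ}
    (hgh : ∀ t ∈ s, |g t| ≤ h t) : |Λ g| ≤ Λ h := by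
  have hsub : 0 ≤ Λ (h - g) := hΛ _ fun t ht => sub_nonneg.2 (abs_le.1 (hgh t ht)).2
  have hadd : 0 ≤ Λ (h + g) := hΛ _ fun t ht => neg_le_iff_add_nonneg'.1 (abs_le.1 (hgh t ht)).1
  rw [map_sub] at hsub
  rw [map_add] at hadd
  exact abs_le.2 ⟨by linarith, by linarith⟩

variable {ι : Type*} {l : Filter ι} {Λ : ι → (ℝ → ℝ) →ₗ[ℝ] ℝ} {r : ι → ℝ} {A B M : ℝ}

theorem tendsto_mul_map_zero_of_isLittleO_sq (hr : ∀ᶠ i in l, 0 ≤ r i)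
    (hΛ : ∀ᶠ i in l, ∀ g : ℝ → ℝ, (∀ t ∈ s, 0 ≤ g t) → 0 ≤ Λ i g)
    (h₂ : Tendsto (fun i => r i * Λ i fun t => (t - x) ^ 2) l (𝓝 B))
    (h₄ : Tendsto (fun i => r i * Λ i fun t => (t - x) ^ 4) l (𝓝 0))
    {ρ : ℝ → ℝ} (hM : ∀ t ∈ s, |ρ t| ≤ M) (hρ : ρ =o[𝓝[s] x] fun t => (t - x) ^ 2) :
    Tendsto (fun i => r i * Λ i ρ) l (𝓝 0) := by
  rw [Metric.tendsto_nhds]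
  intro η hη
  set ε := η / (|B| + 1)
  obtain ⟨C, hC⟩ := exists_abs_le_mul_sq_add_mul_pow_four hρ hM (ε := ε) (by positivity)
  have hlt : ε * B + C * 0 < η := by
    rw [mul_zero, add_zero, div_mul_eq_mul_div, div_lt_iff₀ (by positivity)]
    exact mul_lt_mul_of_pos_left ((le_abs_self B).trans_lt (lt_add_one _)) hη
  filter_upwards [((h₂.const_mul ε).add (h₄.const_mul C)).eventually_lt_const hlt, hr, hΛ]
    with i hi hri hΛi
  rw [dist_zero_right, Real.norm_eq_abs, abs_mul, abs_of_nonneg hri]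
  calc r i * |Λ i ρ|
      ≤ r i * Λ i (ε • (fun t => (t - x) ^ 2) + C • fun t => (t - x) ^ 4) :=
        mul_le_mul_of_nonneg_left (abs_map_le_of_forall_abs_le hΛi hC) hri
    _ = ε * (r i * Λ i fun t => (t - x) ^ 2) + C * (r i * Λ i fun t => (t - x) ^ 4) := by
        rw [map_add, map_smul, map_smul, smul_eq_mul, smul_eq_mul]
        ring
    _ < η := hi

theorem tendsto_mul_map_sub_of_isLittleO_sq (hr : ∀ᶠ i in l, 0 ≤ r i)
    (hΛ : ∀ᶠ i in l, ∀ g : ℝ → ℝ, (∀ t ∈ s, 0 ≤ g t) → 0 ≤ Λ i g)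
    (h₀ : ∀ᶠ i in l, Λ i (fun _ => 1) = 1)
    (h₁ : Tendsto (fun i => r i * Λ i fun t => t - x) l (𝓝 A))
    (h₂ : Tendsto (fun i => r i * Λ i fun t => (t - x) ^ 2) l (𝓝 B))
    (h₄ : Tendsto (fun i => r i * Λ i fun t => (t - x) ^ 4) l (𝓝 0))
    {g : ℝ → ℝ} {d₁ d₂ : ℝ}
    (hM : ∀ t ∈ s, |g t - (g x + d₁ * (t - x) + d₂ / 2 * (t - x) ^ 2)| ≤ M)
    (hg : (fun t => g t - (g x + d₁ * (t - x) + d₂ / 2 * (t - x) ^ 2))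
      =o[𝓝[s] x] fun t => (t - x) ^ 2) :
    Tendsto (fun i => r i * (Λ i g - g x)) l (𝓝 (d₁ * A + d₂ / 2 * B)) := by
  have hrem := tendsto_mul_map_zero_of_isLittleO_sq hr hΛ h₂ h₄ hM hg
  have hlim := (h₁.const_mul d₁).add (h₂.const_mul (d₂ / 2)) |>.add hrem
  rw [add_zero] at hlim
  refine hlim.congr' ?_
  filter_upwards [h₀] with i hi
  have hdecomp : g = (g x • fun _ => 1) + (d₁ • fun t => t - x) +
      ((d₂ / 2) • fun t => (t - x) ^ 2) +
      fun t => g t - (g x + d₁ * (t - x) + d₂ / 2 * (t - x) ^ 2) := by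
    ext t
    simp only [Pi.add_apply, Pi.smul_apply, smul_eq_mul]
    ring
  have hΛg := congrArg (Λ i) hdecomp
  simp only [map_add, map_smul, smul_eq_mul, hi] at hΛg
  rw [hΛg]
  ring

end PositiveFunctionals

section Voronovskaja

theorem exists_abs_sub_le_of_continuousOn {α : Type*} [TopologicalSpace α] {s : Set α}
    (hs : IsCompact s) {g q : α → ℝ} (hg : ∃ M, ∀ t ∈ s, |g t| ≤ M) (hq : ContinuousOn q s) :
    ∃ M, ∀ t ∈ s, |g t - q t| ≤ M := by
  obtain ⟨M, hM⟩ := hg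
  obtain ⟨N, hN⟩ := hs.exists_bound_of_continuousOn hq
  exact ⟨M + N, fun t ht => (abs_sub _ _).trans (add_le_add (hM t ht) (hN t ht))⟩

theorem tendsto_natCast_mul_Bop_sub {a : ℕ → ℝ} {x L : ℝ}
    (ha : ∀ᶠ n in atTop, a n ∈ Icc (0 : ℝ) 1)
    (hL : Tendsto (fun n : ℕ => (n : ℝ) * (a n - x)) atTop (𝓝 L)) {g : ℝ → ℝ} {d₁ d₂ : ℝ}
    (hg : ∃ M, ∀ t ∈ Icc (0 : ℝ) 1, |g t| ≤ M)
    (hd : (fun t => g t - (g x + d₁ * (t - x) + d₂ / 2 * (t - x) ^ 2))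
      =o[𝓝[Icc 0 1] x] fun t => (t - x) ^ 2) :
    Tendsto (fun n : ℕ => (n : ℝ) * (Bop n g (a n) - g x)) atTop
      (𝓝 (d₁ * L + d₂ / 2 * (x - x ^ 2))) := by
  obtain ⟨M, hM⟩ := exists_abs_sub_le_of_continuousOn isCompact_Icc hg
    (q := fun t => g x + d₁ * (t - x) + d₂ / 2 * (t - x) ^ 2) (by fun_prop)
  refine tendsto_mul_map_sub_of_isLittleO_sq (Λ := fun n => bernsteinFunctional n (a n))
    (.of_forall fun n => n.cast_nonneg) (ha.mono fun n han _ => Bop_nonneg n han)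
    (.of_forall fun n => Bop_one n (a n)) ?_ (tendsto_natCast_mul_Bop_sub_sq hL)
    (tendsto_natCast_mul_Bop_sub_pow_four hL) hM hd
  refine hL.congr' ?_
  filter_upwards [eventually_ne_atTop 0] with n hn
  rw [bernsteinFunctional_apply, Bop_sub hn]

theorem taylorWithinEval_two (g : ℝ → ℝ) (s : Set ℝ) (x t : ℝ) :
    taylorWithinEval g 2 s x t = g x + derivWithin g s x * (t - x) +
      derivWithin (derivWithin g s) s x / 2 * (t - x) ^ 2 := by
  have hsecond : iteratedDerivWithin 2 g s x = derivWithin (derivWithin g s) s x := by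
    simp only [iteratedDerivWithin_succ, iteratedDerivWithin_zero]
  rw [taylorWithinEval_succ, taylorWithinEval_succ, taylor_within_zero_eval, zero_add,
    iteratedDerivWithin_one, one_add_one_eq_two, hsecond]
  simp only [smul_eq_mul, Nat.factorial_zero, Nat.factorial_one]
  push_cast
  ring

end Voronovskaja

section LogarithmicNodes

theorem log_one_add_sub_isLittleO_sq :
    (fun u : ℝ => Real.log (1 + u) - (u - u ^ 2 / 2)) =o[𝓝 0] fun u => u ^ 2 := by
  have hbig : (fun u : ℝ => Real.log (1 + u) - (u - u ^ 2 / 2)) =O[𝓝 0] fun u => u ^ 3 := by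
    refine IsBigO.of_bound 2 ?_
    filter_upwards [Metric.ball_mem_nhds (0 : ℝ) one_half_pos] with u hu
    have hu' : |u| < 1 / 2 := by simpa using hu
    have hbound := Real.abs_log_sub_add_sum_range_le (x := -u) (by rw [abs_neg]; linarith) 2
    calc ‖Real.log (1 + u) - (u - u ^ 2 / 2)‖
        = |∑ i ∈ Finset.range 2, (-u) ^ (i + 1) / (i + 1) + Real.log (1 - -u)| := by
          rw [Real.norm_eq_abs, Finset.sum_range_succ, Finset.sum_range_one, sub_neg_eq_add]
          congr 1
          push_cast
          ring
      _ ≤ |u| ^ 3 / (1 - |u|) := by simpa only [abs_neg] using hbound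
      _ ≤ 2 * ‖u ^ 3‖ := by
          rw [Real.norm_eq_abs, abs_pow, div_le_iff₀ (by linarith)]
          nlinarith [pow_nonneg (abs_nonneg u) 3]
  exact hbig.trans_isLittleO (isLittleO_pow_pow (by norm_num))

theorem log_one_add_mul_sub_mul_log_isLittleO_sq (x : ℝ) :
    (fun c : ℝ => Real.log (1 + x * c) - x * Real.log (1 + c) - (x - x ^ 2) / 2 * c ^ 2)
      =o[𝓝 0] fun c => c ^ 2 := by
  have hscale : Tendsto (fun c : ℝ => x * c) (𝓝 0) (𝓝 0) := by
    simpa using (continuous_const_mul x).tendsto 0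
  have hxc : (fun c : ℝ => Real.log (1 + x * c) - (x * c - (x * c) ^ 2 / 2))
      =o[𝓝 0] fun c => c ^ 2 := by
    refine (log_one_add_sub_isLittleO_sq.comp_tendsto hscale).trans_isBigO ?_
    simpa only [Function.comp_def, mul_pow] using isBigO_const_mul_self (x ^ 2) _ _
  refine (hxc.sub (log_one_add_sub_isLittleO_sq.const_mul_left x)).congr_left fun c => ?_
  ring

theorem tendsto_log_one_add_div_self :
    Tendsto (fun c : ℝ => Real.log (1 + c) / c) (𝓝[≠] 0) (𝓝 1) := by
  have hderiv := (Real.hasDerivAt_log one_ne_zero).tendsto_slope_zero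
  simpa [div_eq_inv_mul] using hderiv

theorem tendsto_log_div_log_sub_div (x : ℝ) :
    Tendsto (fun c : ℝ => (Real.log (1 + x * c) / Real.log (1 + c) - x) / c) (𝓝[≠] 0)
      (𝓝 ((x - x ^ 2) / 2)) := by
  have hnum : Tendsto (fun c : ℝ => (Real.log (1 + x * c) - x * Real.log (1 + c)) / c ^ 2)
      (𝓝[≠] 0) (𝓝 ((x - x ^ 2) / 2)) := by
    have hzero := ((log_one_add_mul_sub_mul_log_isLittleO_sq x).mono
      nhdsWithin_le_nhds).tendsto_div_nhds_zero (l := 𝓝[≠] 0)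
    refine tendsto_sub_nhds_zero_iff.1 (hzero.congr' ?_)
    filter_upwards [self_mem_nhdsWithin] with c hc
    have hc' : c ≠ 0 := hc
    field_simp
  have hquot := hnum.div tendsto_log_one_add_div_self one_ne_zero
  rw [div_one] at hquot
  refine hquot.congr' ?_
  filter_upwards [self_mem_nhdsWithin, tendsto_log_one_add_div_self.eventually_ne one_ne_zero]
    with c hc hlog
  have hc' : c ≠ 0 := hc
  have hlog' : Real.log (1 + c) ≠ 0 := (div_ne_zero_iff.1 hlog).1
  simp only [Pi.div_apply]
  field_simp

theorem tendsto_natCast_mul_aFun_sub {μ : ℝ} (hμ : 1 + μ ≠ 0) (x : ℝ) :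
    Tendsto (fun n : ℕ => (n : ℝ) * (aFun μ n x - x)) atTop (𝓝 ((x - x ^ 2) / 2 / (1 + μ))) := by
  have hstep : Tendsto (fun n : ℕ => 1 / ((n : ℝ) * (1 + μ))) atTop (𝓝[≠] 0) := by
    refine tendsto_nhdsWithin_iff.2 ⟨?_, ?_⟩
    · simpa [mul_comm] using (tendsto_inv_atTop_nhds_zero_nat (𝕜 := ℝ)).const_mul (1 + μ)⁻¹
    · filter_upwards [eventually_ne_atTop 0] with n hn
      exact one_div_ne_zero (mul_ne_zero (Nat.cast_ne_zero.2 hn) hμ)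
  refine (((tendsto_log_div_log_sub_div x).comp hstep).div_const (1 + μ)).congr fun n => ?_
  simp only [Function.comp_apply, aFun, mul_one_div, div_div_eq_mul_div, div_one]
  rw [← mul_assoc, mul_div_cancel_right₀ _ hμ, mul_comm]

-- For `n = 0` both logarithms are `log 1 = 0`, and `aFun μ 0 x = 0 / 0 = 0`.
theorem aFun_mem_Icc {μ x : ℝ} (hμ : 0 ≤ 1 + μ) (hx : x ∈ Icc (0 : ℝ) 1) (n : ℕ) :
    aFun μ n x ∈ Icc (0 : ℝ) 1 := by
  have hden : 0 ≤ (n : ℝ) * (1 + μ) := mul_nonneg n.cast_nonneg hμ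
  have hx0 : 0 ≤ x / (n * (1 + μ)) := div_nonneg hx.1 hden
  have hx1 : x / (n * (1 + μ)) ≤ 1 / (n * (1 + μ)) := div_le_div_of_nonneg_right hx.2 hden
  have hlog0 : 0 ≤ Real.log (1 + x / (n * (1 + μ))) := Real.log_nonneg (by linarith)
  have hlog1 : Real.log (1 + x / (n * (1 + μ))) ≤ Real.log (1 + 1 / (n * (1 + μ))) :=
    Real.log_le_log (by linarith) (by linarith)
  exact ⟨div_nonneg hlog0 (hlog0.trans hlog1), div_le_one_of_le₀ hlog1 (hlog0.trans hlog1)⟩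

theorem logμ_pos_s12 {μ t : ℝ} (hμt : 0 < μ + t) : 0 < logμ μ t :=
  Real.log_pos (by linarith)

theorem Lop_eq_logμ_mul_Bop (μ : ℝ) (n : ℕ) (f : ℝ → ℝ) (x : ℝ) :
    Lop μ n f x = logμ μ x * Bop n (fun t => f t / logμ μ t) (aFun μ n x) := by
  simp only [Lop, Bop, mul_one_div]

theorem exists_abs_div_logμ_le {μ : ℝ} (hμ : 0 < μ) {f : ℝ → ℝ}
    (hf : ∃ M, ∀ t ∈ Icc (0 : ℝ) 1, |f t| ≤ M) :
    ∃ M, ∀ t ∈ Icc (0 : ℝ) 1, |f t / logμ μ t| ≤ M := by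
  obtain ⟨M, hM⟩ := hf
  refine ⟨M / logμ μ 0, fun t ht => ?_⟩
  have hmin : 0 < logμ μ 0 := logμ_pos_s12 (by linarith)
  have hmono : logμ μ 0 ≤ logμ μ t := Real.log_le_log (by linarith) (by linarith [ht.1])
  rw [abs_div, abs_of_pos (hmin.trans_le hmono)]
  exact div_le_div₀ ((abs_nonneg _).trans (hM t ht)) (hM t ht) hmin hmono

theorem contDiffOn_div_logμ {μ : ℝ} (hμ : 0 < μ) {n : WithTop ℕ∞} {f : ℝ → ℝ}
    (hf : ContDiffOn ℝ n f (Icc 0 1)) : ContDiffOn ℝ n (fun t => f t / logμ μ t) (Icc 0 1) := by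
  refine hf.div (ContDiffOn.log (by fun_prop) fun t ht => ?_)
    fun t ht => (logμ_pos_s12 (by linarith [ht.1])).ne'
  linarith [ht.1]

end LogarithmicNodes

-- `d₁` and `d₂` are the first two Peano derivatives of `f_μ` at `x`.
theorem stmt12_general {μ : ℝ} (hμ : 0 < μ) {f : ℝ → ℝ} {x d₁ d₂ : ℝ} (hx : x ∈ Icc (0 : ℝ) 1)
    (hf : ∃ M, ∀ t ∈ Icc (0 : ℝ) 1, |f t| ≤ M)
    (hd : (fun t => f t / logμ μ t -
      (f x / logμ μ x + d₁ * (t - x) + d₂ / 2 * (t - x) ^ 2))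
        =o[𝓝[Icc 0 1] x] fun t => (t - x) ^ 2) :
    Tendsto (fun n : ℕ => (n : ℝ) * (Lop μ n f x - f x)) atTop
      (𝓝 (logμ μ x * ((x - x ^ 2) / 2) * (d₁ / (1 + μ) + d₂))) := by
  have hlog : logμ μ x ≠ 0 := (logμ_pos_s12 (by linarith [hx.1])).ne'
  have hvoron := tendsto_natCast_mul_Bop_sub (.of_forall (aFun_mem_Icc (by linarith) hx))
    (tendsto_natCast_mul_aFun_sub (by linarith) x) (exists_abs_div_logμ_le hμ hf) hd
  convert hvoron.const_mul (logμ μ x) using 2 with n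
  · rw [Lop_eq_logμ_mul_Bop, mul_left_comm, mul_sub (logμ μ x), mul_div_cancel₀ _ hlog]
  · ring

theorem stmt12 (μ : ℝ) (hμ : 0 < μ) (f : ℝ → ℝ)
    (hf : ContDiffOn ℝ 2 f (Set.Icc (0:ℝ) 1))
    (x : ℝ) (hx : x ∈ Set.Icc (0:ℝ) 1) :
    Tendsto (fun n : ℕ => (n : ℝ) * (Lop μ n f x - f x)) atTop
      (nhds (logμ μ x * ((x - x ^ 2) / 2) *
        (derivWithin (fun t => f t / logμ μ t) (Set.Icc (0:ℝ) 1) x / (1 + μ) +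
          derivWithin (derivWithin (fun t => f t / logμ μ t) (Set.Icc (0:ℝ) 1))
            (Set.Icc (0:ℝ) 1) x))) := by
  have hTaylor := taylor_isLittleO (n := 2) (convex_Icc 0 1) hx (contDiffOn_div_logμ hμ hf)
  simp only [taylorWithinEval_two] at hTaylor
  exact stmt12_general hμ hx (isCompact_Icc.exists_bound_of_continuousOn hf.continuousOn) hTaylor
end
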